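/- Let N be a natural number and c₀, …, c_N real numbers. Define u(x) = Σ_{n=0}^{N} cₙ·Uₙ(x) and β(x) = Σ_{n=0}^{N} (2/(n+1))·cₙ·Uₙ(x). Then for every natural number m, −(1/(2π))·∫_{−1}^{1}∫_{−1}^{1} ln|x−y| · d/dx[√(1−x²)·β(x)] · d/dy[√(1−y²)·Uₘ(y)] dx dy = ∫_{−1}^{1} u(x)·Uₘ(x)·√(1−x²) dx. (This is the identity N_{0,ω}⁻¹ = 2[−(∂ₓω)²]^{−1/2} applied to finite Chebyshev expansions, tested against the complete family Uₘ in L²_ω.) -/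

import Mathlib

/-!
The derivative of `√(1 - y²) Uₘ(y)` is `-(m + 1) Tₘ₊₁(y) / √(1 - y²)`, whose logarithmic potential
on `[-1, 1]` is `π Tₘ₊₁`. Since `Tₘ₊₁' = (m + 1) Uₘ`, integrating by parts in `x` gives
`⟨N_{0,ω} β, Uₘ⟩ = (m + 1) / 2 * ∫ β Uₘ ω` for every `β` of class `C¹`. When `β` is expanded in the
`Uₙ`, orthogonality leaves only the term `n = m`, where the factor `2 / (n + 1)` cancels.

The potential of `Tₙ / √(1 - y²)` comes from the Fourier coefficients of `log (sin s)` through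
`cos θ - cos φ = -2 sin ((θ + φ) / 2) sin ((θ - φ) / 2)`.
-/

open Real Set MeasureTheory intervalIntegral Finset

/-- The `n`-th Chebyshev polynomial of the second kind, as a real function. -/
noncomputable def chebU (n : ℕ) : ℝ → ℝ := fun x => (Polynomial.Chebyshev.U ℝ n).eval x

section

open Polynomial Polynomial.Chebyshev

lemma integral_eval_U_two_mul_measureT (n : ℕ) :
    ∫ x, (U ℝ (2 * n)).eval x ∂measureT = π := by
  induction n with
  | zero => simpa using integral_eval_T_real_measureT_zero
  | succ n ih =>
    have recurrence (x : ℝ) : (U ℝ (2 * (n + 1 : ℕ))).eval x =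
        2 * (T ℝ (2 * n + 2)).eval x + (U ℝ (2 * n)).eval x := by
      simpa [mul_add] using congrArg (eval x) (U_eq_two_mul_T_add_U ℝ (2 * n))
    simp_rw [recurrence]
    rw [MeasureTheory.integral_add (integrable_measureT (by fun_prop))
        (integrable_measureT (by fun_prop)), MeasureTheory.integral_const_mul,
      integral_eval_T_real_measureT_of_ne_zero (by omega), ih, mul_zero, zero_add]

lemma integral_mul_eval_U_two_mul_sub_one_measureT {n : ℕ} (hn : n ≠ 0) :
    ∫ x, x * (U ℝ (2 * n - 1)).eval x ∂measureT = π := by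
  have expansion (x : ℝ) : x * (U ℝ (2 * n - 1)).eval x =
      (U ℝ (2 * n)).eval x - (T ℝ (2 * n)).eval x := by
    simp [T_eq_U_sub_X_mul_U]
  simp_rw [expansion]
  rw [MeasureTheory.integral_sub (integrable_measureT (by fun_prop))
      (integrable_measureT (by fun_prop)), integral_eval_U_two_mul_measureT,
    integral_eval_T_real_measureT_of_ne_zero (by omega), sub_zero]

lemma intervalIntegrable_log_sin_mul {f : ℝ → ℝ} {a b : ℝ} (hf : ContinuousOn f (uIcc a b)) :
    IntervalIntegrable (fun s => log (sin s) * f s) volume a b :=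
  intervalIntegrable_log_sin.mul_continuousOn hf

lemma hasDerivAt_sin_mul_log_sin (a : ℝ) {s : ℝ} (hs : sin s ≠ 0) :
    HasDerivAt (fun s => sin (a * s) * log (sin s))
      (a * (log (sin s) * cos (a * s)) + sin (a * s) * cos s / sin s) s := by
  have h := (((hasDerivAt_id s).const_mul a).sin).mul ((hasDerivAt_sin s).log hs)
  exact h.congr_deriv (by simp only [id]; ring)

lemma integral_log_sin_mul_cos_two_mul {n : ℕ} (hn : n ≠ 0) :
    ∫ s in (0 : ℝ)..π, log (sin s) * cos (2 * n * s) = -(π / (2 * n)) := by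
  have sin_two_mul_eq (s : ℝ) :
      sin (2 * n * s) = (U ℝ (2 * n - 1)).eval (cos s) * sin s := by
    simp [U_real_cos]
  -- Splitting off `sin s` makes the primitive continuous up to the endpoints, as `x * log x` is.
  have hasDerivAt_primitive (s : ℝ) (hs : s ∈ Ioo 0 π) :
      HasDerivAt (fun s => (U ℝ (2 * n - 1)).eval (cos s) * (sin s * log (sin s)))
        (2 * n * (log (sin s) * cos (2 * n * s)) + cos s * (U ℝ (2 * n - 1)).eval (cos s)) s := by
    have hsin := (sin_pos_of_mem_Ioo hs).ne'
    convert hasDerivAt_sin_mul_log_sin (2 * n) hsin using 1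
    · funext t
      rw [sin_two_mul_eq, mul_assoc]
    · rw [sin_two_mul_eq]
      field_simp
  have log_part : IntervalIntegrable (fun s => 2 * n * (log (sin s) * cos (2 * n * s)))
      volume 0 π :=
    (intervalIntegrable_log_sin_mul (by fun_prop)).const_mul _
  have cos_part : IntervalIntegrable (fun s => cos s * (U ℝ (2 * n - 1)).eval (cos s))
      volume 0 π :=
    Continuous.intervalIntegrable (by fun_prop) _ _
  have primitive_cont :
      Continuous fun s => (U ℝ (2 * n - 1)).eval (cos s) * (sin s * log (sin s)) :=
    (by fun_prop : Continuous fun s => (U ℝ (2 * n - 1)).eval (cos s)).mul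
      (continuous_mul_log.comp continuous_sin)
  have total := integral_eq_sub_of_hasDerivAt_of_le pi_pos.le primitive_cont.continuousOn
    hasDerivAt_primitive (log_part.add cos_part)
  rw [intervalIntegral.integral_add log_part cos_part, intervalIntegral.integral_const_mul,
    ← integral_measureT_eq_integral_cos (f := fun x => x * (U ℝ (2 * n - 1)).eval x),
    integral_mul_eval_U_two_mul_sub_one_measureT hn] at total
  simp only [sin_pi, sin_zero, zero_mul, mul_zero, sub_zero] at total
  field_simp
  linarith

lemma integral_log_sin_mul_sin_two_mul (n : ℕ) :
    ∫ s in (0 : ℝ)..π, log (sin s) * sin (2 * n * s) = 0 := by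
  have reflect (s : ℝ) : sin (2 * n * (π - s)) = -sin (2 * n * s) := by
    rw [← sin_nat_mul_two_pi_sub]
    ring_nf
  have h := intervalIntegral.integral_comp_sub_left (a := 0) (b := π)
    (fun s => log (sin s) * sin (2 * n * s)) π
  simp only [sin_pi_sub, reflect, mul_neg, intervalIntegral.integral_neg, sub_self, sub_zero] at h
  linarith

lemma integral_log_sin_mul_cos_two_mul_sub {n : ℕ} (hn : n ≠ 0) (a : ℝ) :
    ∫ s in (0 : ℝ)..π, log (sin s) * cos (2 * n * s - a) = -(π / (2 * n)) * cos a := by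
  have expand (s : ℝ) : log (sin s) * cos (2 * n * s - a) =
      cos a * (log (sin s) * cos (2 * n * s)) + sin a * (log (sin s) * sin (2 * n * s)) := by
    rw [cos_sub]
    ring
  simp_rw [expand]
  rw [intervalIntegral.integral_add
      ((intervalIntegrable_log_sin_mul (by fun_prop)).const_mul _)
      ((intervalIntegrable_log_sin_mul (by fun_prop)).const_mul _),
    intervalIntegral.integral_const_mul, intervalIntegral.integral_const_mul,
    integral_log_sin_mul_cos_two_mul hn, integral_log_sin_mul_sin_two_mul]
  ring

lemma integral_log_sin_add_div_two_mul_cos {n : ℕ} (hn : n ≠ 0) (θ : ℝ) :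
    ∫ φ in (-π)..π, log (sin ((θ + φ) / 2)) * cos (n * φ) = -(π / n) * cos (n * θ) := by
  let f : ℝ → ℝ := fun s => log (sin s) * cos (2 * n * s - n * θ)
  have f_periodic : Function.Periodic f π := fun s => by
    have shift : 2 * n * (s + π) - n * θ = 2 * n * s - n * θ + n * (2 * π) := by ring
    simp only [f, sin_add_pi, log_neg_eq_log, shift, cos_add_nat_mul_two_pi]
  calc
    _ = ∫ φ in (-π)..π, f (θ / 2 + φ / 2) := by
      refine intervalIntegral.integral_congr fun φ _ => ?_
      simp only [f]
      ring_nf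
    _ = 2 * ∫ s in (θ / 2 + -π / 2)..(θ / 2 + -π / 2 + π), f s := by
      rw [intervalIntegral.integral_comp_add_div _ two_ne_zero, smul_eq_mul]
      ring_nf
    _ = 2 * ∫ s in (0 : ℝ)..π, f s := by
      rw [f_periodic.intervalIntegral_add_eq _ 0, zero_add]
    _ = _ := by
      rw [integral_log_sin_mul_cos_two_mul_sub hn]
      field_simp

lemma intervalIntegrable_log_sin_add_div_two (θ a b : ℝ) :
    IntervalIntegrable (fun φ => log (sin ((θ + φ) / 2))) volume a b :=
  MeromorphicOn.intervalIntegrable_log (f := fun φ => sin ((θ + φ) / 2)) fun φ _ =>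
    AnalyticAt.meromorphicAt (by fun_prop)

lemma log_abs_cos_sub_cos {θ φ : ℝ} (h : cos θ ≠ cos φ) :
    log |cos θ - cos φ| = log 2 + log (sin ((θ + φ) / 2)) + log (sin ((θ - φ) / 2)) := by
  have hne := sub_ne_zero.2 h
  rw [cos_sub_cos] at hne
  have hdiff := right_ne_zero_of_mul hne
  have hsum := right_ne_zero_of_mul (left_ne_zero_of_mul hne)
  rw [log_abs, cos_sub_cos, log_mul (by simpa using hsum) hdiff, log_mul (by norm_num) hsum,
    log_neg_eq_log]

lemma ae_cos_ne_cos_of_mem_Ioc (θ : ℝ) : ∀ᵐ φ, φ ∈ Ioc 0 π → cos θ ≠ cos φ := by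
  have subsingleton : {φ ∈ Ioc 0 π | cos θ = cos φ}.Subsingleton := fun φ hφ ψ hψ =>
    injOn_cos (Ioc_subset_Icc_self hφ.1) (Ioc_subset_Icc_self hψ.1) (hφ.2.symm.trans hψ.2)
  filter_upwards [compl_mem_ae_iff.2 (subsingleton.measure_zero volume)] with φ hφ hmem heq
  exact hφ ⟨hmem, heq⟩

lemma integral_log_abs_cos_sub_cos_mul_cos {n : ℕ} (hn : n ≠ 0) (θ : ℝ) :
    ∫ φ in (0 : ℝ)..π, log |cos θ - cos φ| * cos (n * φ) = -(π / n) * cos (n * θ) := by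
  let g : ℝ → ℝ := fun φ => log (sin ((θ + φ) / 2)) * cos (n * φ)
  have g_int (a b : ℝ) : IntervalIntegrable g volume a b :=
    (intervalIntegrable_log_sin_add_div_two θ a b).mul_continuousOn (by fun_prop)
  have g_neg_int : IntervalIntegrable (fun φ => g (-φ)) volume 0 π := by
    simpa using (g_int 0 (-π)).comp_sub_left 0
  have integral_cos_zero : ∫ φ in (0 : ℝ)..π, cos (n * φ) = 0 := by
    simp [intervalIntegral.integral_comp_mul_left _ (Nat.cast_ne_zero.2 hn), integral_cos]
  calc
    _ = ∫ φ in (0 : ℝ)..π, (log 2 * cos (n * φ) + (g φ + g (-φ))) := by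
      refine intervalIntegral.integral_congr_ae ?_
      filter_upwards [ae_cos_ne_cos_of_mem_Ioc θ] with φ hne hφ
      rw [uIoc_of_le pi_pos.le] at hφ
      simp only [g, log_abs_cos_sub_cos (hne hφ), mul_neg, cos_neg, ← sub_eq_add_neg]
      ring
    _ = ∫ φ in (-π)..π, g φ := by
      rw [intervalIntegral.integral_add (Continuous.intervalIntegrable (by fun_prop) _ _)
          ((g_int _ _).add g_neg_int), intervalIntegral.integral_const_mul, integral_cos_zero,
        mul_zero, zero_add, intervalIntegral.integral_add (g_int _ _) g_neg_int,
        intervalIntegral.integral_comp_neg, neg_zero, add_comm,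
        intervalIntegral.integral_add_adjacent_intervals (g_int _ _) (g_int _ _)]
    _ = _ := integral_log_sin_add_div_two_mul_cos hn θ

lemma integral_log_abs_sub_mul_eval_T_measureT {n : ℕ} (hn : n ≠ 0) {x : ℝ}
    (hx : x ∈ Set.Icc (-1 : ℝ) 1) :
    ∫ y, log |x - y| * (T ℝ n).eval y ∂measureT = -(π / n) * (T ℝ n).eval x := by
  rw [integral_measureT_eq_integral_cos, ← cos_arccos hx.1 hx.2]
  simpa only [T_real_cos, Int.cast_natCast] using
    integral_log_abs_cos_sub_cos_mul_cos hn (arccos x)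

lemma contDiff_eval (p : ℝ[X]) (k : WithTop ℕ∞) : ContDiff ℝ k fun x => p.eval x := by
  simpa only [coe_aeval_eq_eval] using p.contDiff_aeval (𝕜 := ℝ) k

lemma contDiff_chebU (n : ℕ) (k : WithTop ℕ∞) : ContDiff ℝ k (chebU n) := contDiff_eval _ k

lemma hasDerivAt_sqrt_one_sub_sq_mul {β : ℝ → ℝ} {β' x : ℝ} (hβ : HasDerivAt β β' x)
    (hx : x ∈ Set.Ioo (-1 : ℝ) 1) :
    HasDerivAt (fun t => √(1 - t ^ 2) * β t)
      (((1 - x ^ 2) * β' - x * β x) * √(1 - x ^ 2)⁻¹) x := by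
  have hpos : 0 < 1 - x ^ 2 := by nlinarith [hx.1, hx.2]
  have hsqrt : HasDerivAt (fun t => √(1 - t ^ 2)) (-x * √(1 - x ^ 2)⁻¹) x :=
    (((hasDerivAt_pow 2 x).const_sub 1).sqrt hpos.ne').congr_deriv (by
      rw [Real.sqrt_inv]
      push_cast
      ring)
  have sqrt_eq : √(1 - x ^ 2) = (1 - x ^ 2) * √(1 - x ^ 2)⁻¹ := by
    rw [Real.sqrt_inv, ← div_eq_mul_inv, div_sqrt]
  refine (hsqrt.mul hβ).congr_deriv ?_
  rw [sqrt_eq]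
  ring

lemma deriv_sqrt_one_sub_sq_mul_chebU (n : ℕ) {x : ℝ} (hx : x ∈ Set.Ioo (-1 : ℝ) 1) :
    deriv (fun t => √(1 - t ^ 2) * chebU n t) x =
      -((n + 1) * (T ℝ (n + 1 : ℕ)).eval x) * √(1 - x ^ 2)⁻¹ := by
  have identity : (n + 1) * (T ℝ (n + 1)).eval x =
      x * (U ℝ n).eval x - (1 - x ^ 2) * (derivative (U ℝ n)).eval x := by
    simpa using congrArg (eval x) (add_one_mul_T_eq_poly_in_U (R := ℝ) n)
  have hchebU : HasDerivAt (chebU n) _ x := (U ℝ n).hasDerivAt x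
  rw [(hasDerivAt_sqrt_one_sub_sq_mul hchebU hx).deriv]
  push_cast
  rw [identity, chebU]
  ring

lemma intervalIntegrable_deriv_sqrt_one_sub_sq_mul {β : ℝ → ℝ} (hβ : ContDiff ℝ 1 β) :
    IntervalIntegrable (deriv fun t => √(1 - t ^ 2) * β t) volume (-1) 1 := by
  have hcont : Continuous fun x => (1 - x ^ 2) * deriv β x - x * β x := by
    have := hβ.continuous_deriv le_rfl
    have := hβ.continuous
    fun_prop
  refine (intervalIntegrable_sqrt_one_sub_sq_inv.continuousOn_mul
    hcont.continuousOn).congr_uIoo fun x hx => ?_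
  rw [uIoo_of_le (by norm_num)] at hx
  exact (hasDerivAt_sqrt_one_sub_sq_mul (hβ.differentiable one_ne_zero x).hasDerivAt hx).deriv.symm

lemma integral_deriv_sqrt_one_sub_sq_mul_mul {β γ : ℝ → ℝ} (hβ : ContDiff ℝ 1 β)
    (hγ : ContDiff ℝ 1 γ) :
    ∫ x in (-1 : ℝ)..1, deriv (fun t => √(1 - t ^ 2) * β t) x * γ x =
      -∫ x in (-1 : ℝ)..1, √(1 - x ^ 2) * β x * deriv γ x := by
  have hβ_cont := hβ.continuous
  have hβ_diff := hβ.differentiable one_ne_zero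
  have hγ_diff := hγ.differentiable one_ne_zero
  rw [intervalIntegral.integral_mul_deriv_eq_deriv_mul_of_hasDerivAt
      (u' := deriv fun t => √(1 - t ^ 2) * β t)
      (Continuous.continuousOn (by fun_prop)) hγ.continuous.continuousOn ?_
      (fun x _ => (hγ_diff x).hasDerivAt) (intervalIntegrable_deriv_sqrt_one_sub_sq_mul hβ)
      ((hγ.continuous_deriv le_rfl).intervalIntegrable _ _)]
  · simp
  · intro x hx
    rw [min_eq_left (by norm_num), max_eq_right (by norm_num)] at hx
    exact (hasDerivAt_sqrt_one_sub_sq_mul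
      (hβ_diff x).hasDerivAt hx).differentiableAt.hasDerivAt

lemma integral_deriv_sqrt_one_sub_sq_mul_mul_eval_T {β : ℝ → ℝ} (hβ : ContDiff ℝ 1 β) (m : ℕ) :
    ∫ x in (-1 : ℝ)..1, deriv (fun t => √(1 - t ^ 2) * β t) x * (T ℝ (m + 1 : ℕ)).eval x =
      -((m + 1) * ∫ x in (-1 : ℝ)..1, β x * chebU m x * √(1 - x ^ 2)) := by
  rw [integral_deriv_sqrt_one_sub_sq_mul_mul hβ (contDiff_eval _ 1),
    ← intervalIntegral.integral_const_mul]
  have deriv_T (x : ℝ) : deriv (fun t => (T ℝ (m + 1 : ℕ)).eval t) x = (m + 1) * chebU m x := by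
    simp [Polynomial.deriv, T_derivative_eq_U, chebU]
  simp only [deriv_T]
  congr! 3
  ring

lemma integral_chebU_mul_chebU_mul_sqrt_of_ne {n m : ℕ} (h : n ≠ m) :
    ∫ x in (-1 : ℝ)..1, chebU n x * chebU m x * √(1 - x ^ 2) = 0 := by
  have T_orthogonal :
      ∫ x in (-1 : ℝ)..1,
        deriv (fun t => √(1 - t ^ 2) * chebU n t) x * (T ℝ (m + 1 : ℕ)).eval x = 0 := calc
    _ = ∫ x in (-1 : ℝ)..1,
        -(n + 1) * ((T ℝ (n + 1 : ℕ)).eval x * (T ℝ (m + 1 : ℕ)).eval x * √(1 - x ^ 2)⁻¹) := by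
      refine intervalIntegral.integral_congr_Ioo_of_le (by norm_num) fun x hx => ?_
      simp only [deriv_sqrt_one_sub_sq_mul_chebU n hx]
      ring
    _ = 0 := by
      rw [intervalIntegral.integral_const_mul, ← integral_measureT,
        integral_eval_T_real_mul_eval_T_real_measureT_of_ne (by simpa using h), mul_zero]
  rw [integral_deriv_sqrt_one_sub_sq_mul_mul_eval_T (contDiff_chebU n 1),
    neg_eq_zero] at T_orthogonal
  exact (mul_eq_zero.1 T_orthogonal).resolve_left (by positivity)

lemma integral_sum_chebU_mul_chebU_mul_sqrt (s : Finset ℕ) (a : ℕ → ℝ) (m : ℕ) :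
    ∫ x in (-1 : ℝ)..1, (∑ n ∈ s, a n * chebU n x) * chebU m x * √(1 - x ^ 2) =
      ∑ n ∈ s, a n * ∫ x in (-1 : ℝ)..1, chebU n x * chebU m x * √(1 - x ^ 2) := by
  simp_rw [← intervalIntegral.integral_const_mul]
  rw [← intervalIntegral.integral_finsetSum]
  · simp_rw [Finset.sum_mul, mul_assoc]
  · intro n _
    have := (contDiff_chebU n 0).continuous
    have := (contDiff_chebU m 0).continuous
    exact Continuous.intervalIntegrable (by fun_prop) _ _

/-- The bilinear form `⟨N₀ φ, ψ⟩` of the Laplace hypersingular operator on `[-1, 1]`. Derivatives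
are classical and taken pointwise, so `φ` and `ψ` are meant to be differentiable on `(-1, 1)`. -/
noncomputable def hypersingularForm (φ ψ : ℝ → ℝ) : ℝ :=
  -(1 / (2 * π)) * ∫ x in (-1 : ℝ)..1, ∫ y in (-1 : ℝ)..1, log |x - y| * deriv φ x * deriv ψ y

lemma integral_log_abs_sub_mul_deriv_sqrt_one_sub_sq_mul_chebU (m : ℕ) {x : ℝ}
    (hx : x ∈ Set.Icc (-1 : ℝ) 1) :
    ∫ y in (-1 : ℝ)..1, log |x - y| * deriv (fun t => √(1 - t ^ 2) * chebU m t) y =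
      π * (T ℝ (m + 1 : ℕ)).eval x := calc
  _ = ∫ y in (-1 : ℝ)..1,
      -(m + 1) * (log |x - y| * (T ℝ (m + 1 : ℕ)).eval y * √(1 - y ^ 2)⁻¹) := by
    refine intervalIntegral.integral_congr_Ioo_of_le (by norm_num) fun y hy => ?_
    simp only [deriv_sqrt_one_sub_sq_mul_chebU m hy]
    ring
  _ = _ := by
    rw [intervalIntegral.integral_const_mul, ← integral_measureT,
      integral_log_abs_sub_mul_eval_T_measureT m.succ_ne_zero hx]
    push_cast
    field_simp

lemma hypersingularForm_sqrt_one_sub_sq_mul_chebU_right (φ : ℝ → ℝ) (m : ℕ) :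
    hypersingularForm φ (fun t => √(1 - t ^ 2) * chebU m t) =
      -(1 / 2) * ∫ x in (-1 : ℝ)..1, deriv φ x * (T ℝ (m + 1 : ℕ)).eval x := calc
  _ = -(1 / (2 * π)) * ∫ x in (-1 : ℝ)..1, π * (deriv φ x * (T ℝ (m + 1 : ℕ)).eval x) := by
    rw [hypersingularForm]
    congr 1
    refine intervalIntegral.integral_congr_Ioo_of_le (by norm_num) fun x hx => ?_
    simp only [mul_right_comm _ (deriv φ x)]
    rw [intervalIntegral.integral_mul_const,
      integral_log_abs_sub_mul_deriv_sqrt_one_sub_sq_mul_chebU m (Ioo_subset_Icc_self hx),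
      mul_assoc, mul_comm (eval x _)]
  _ = _ := by
    rw [intervalIntegral.integral_const_mul]
    field_simp

lemma hypersingularForm_sqrt_one_sub_sq_mul_chebU {β : ℝ → ℝ} (hβ : ContDiff ℝ 1 β) (m : ℕ) :
    hypersingularForm (fun t => √(1 - t ^ 2) * β t) (fun t => √(1 - t ^ 2) * chebU m t) =
      (m + 1) / 2 * ∫ x in (-1 : ℝ)..1, β x * chebU m x * √(1 - x ^ 2) := by
  rw [hypersingularForm_sqrt_one_sub_sq_mul_chebU_right,
    integral_deriv_sqrt_one_sub_sq_mul_mul_eval_T hβ]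
  ring

end

/-- The identity `N_{0,ω}⁻¹ = 2[-(∂ₓω)²]^{-1/2}` on finite Chebyshev expansions:
if `u = Σ cₙ Uₙ` and `β = Σ (2/(n+1)) cₙ Uₙ`, then for every `m`,
`⟨N_{0,ω} β, Uₘ⟩_ω = ⟨u, Uₘ⟩_ω` in the variational sense. -/
theorem weighted_hypersingular_inverse_finite (N : ℕ) (c : ℕ → ℝ) (m : ℕ) :
    -(1 / (2 * π)) * ∫ x in (-1 : ℝ)..1, ∫ y in (-1 : ℝ)..1,
        Real.log |x - y| *
          deriv (fun t => Real.sqrt (1 - t ^ 2) *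
            (∑ n ∈ Finset.range (N + 1), (2 / ((n : ℝ) + 1)) * c n * chebU n t)) x *
          deriv (fun t => Real.sqrt (1 - t ^ 2) * chebU m t) y
      = ∫ x in (-1 : ℝ)..1,
          (∑ n ∈ Finset.range (N + 1), c n * chebU n x) * chebU m x *
            Real.sqrt (1 - x ^ 2) := by
  have β_contDiff :
      ContDiff ℝ 1 fun t => ∑ n ∈ Finset.range (N + 1), (2 / ((n : ℝ) + 1)) * c n * chebU n t :=
    ContDiff.sum fun n _ => contDiff_const.mul (contDiff_chebU n 1)
  refine (hypersingularForm_sqrt_one_sub_sq_mul_chebU β_contDiff m).trans ?_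
  rw [integral_sum_chebU_mul_chebU_mul_sqrt, integral_sum_chebU_mul_chebU_mul_sqrt,
    Finset.mul_sum]
  refine Finset.sum_congr rfl fun n _ => ?_
  rcases eq_or_ne n m with rfl | hnm
  · field_simp
  · rw [integral_chebU_mul_chebU_mul_sqrt_of_ne hnm, mul_zero, mul_zero, mul_zero]
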